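/- arXiv:2012.14146 — 2 statements merged into one kernel-verified Lean document; each statement's English description precedes it below -/
import Mathlib

section
/- Let s₁ ∈ [0,2] and b ∈ ℝ. For every τ ∈ (0,1], every s ∈ [-τ, τ], and every sequence (F_n)_{n∈ℤ} of functions in H^{s₁}(𝕋) with only finitely many nonzero terms, one has ‖((e^{-is∂_x²} − 1) Π_τ F_n)_{n∈ℤ}‖_{X^{0,b}_τ} ≤ τ^{s₁/2} ‖(F_n)‖_{X^{s₁,b}_τ}. -/
noncomputable section

open MeasureTheory Complex Filter Topology AddCircle
open scoped ENNReal

abbrev Torus := AddCircle (2 * Real.pi)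

instance : Fact (0 < 2 * Real.pi) := ⟨by positivity⟩

/-- Japanese bracket `⟨x⟩ = (1+|x|²)^{1/2}`. -/
def jbr (x : ℝ) : ℝ := Real.sqrt (1 + x ^ 2)

/-- The Sobolev `H^s` norm on the torus, via Fourier coefficients. -/
def hsNorm (s : ℝ) (f : Torus → ℂ) : ℝ :=
  Real.sqrt (∑' k : ℤ, jbr k ^ (2 * s) * ‖fourierCoeff f k‖ ^ 2)

/-- Membership in `H^s(𝕋)` (as a function): square integrable with finite `H^s` norm. -/
def InHs (s : ℝ) (f : Torus → ℂ) : Prop :=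
  MemLp f 2 haarAddCircle ∧ Summable fun k : ℤ => jbr k ^ (2 * s) * ‖fourierCoeff f k‖ ^ 2

/-- The frequency cutoff `Π_τ`, keeping the Fourier modes `|k| ≤ τ^{-1/2}`. -/
def projC (τ : ℝ) (f : Torus → ℂ) : Torus → ℂ := fun x =>
  ∑' k : ℤ, if |(k : ℝ)| ≤ τ ^ (-(1 : ℝ) / 2) then fourierCoeff f k * fourier k x else 0

/-- The free Schrödinger group `e^{it∂_x²}`, given by the Fourier multiplier `e^{-itk²}`. -/
def schrod (t : ℝ) (f : Torus → ℂ) : Torus → ℂ := fun x =>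
  ∑' k : ℤ, Complex.exp (-Complex.I * t * (k : ℂ) ^ 2) * fourierCoeff f k * fourier k x

/-- Continuity on `I` with values in `L²(𝕋)`. -/
def ContL2On (I : Set ℝ) (u : ℝ → Torus → ℂ) : Prop :=
  (∀ t ∈ I, MemLp (u t) 2 haarAddCircle) ∧
  ∀ t ∈ I, Tendsto (fun t' => eLpNorm (u t' - u t) 2 haarAddCircle) (nhdsWithin t I) (nhds 0)

/-- Continuity on `I` with values in `H^s(𝕋)`. -/
def ContHsOn (s : ℝ) (I : Set ℝ) (u : ℝ → Torus → ℂ) : Prop :=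
  (∀ t ∈ I, InHs s (u t)) ∧
  ∀ t ∈ I, Tendsto (fun t' => hsNorm s (u t' - u t)) (nhdsWithin t I) (nhds 0)

/-- The cubic nonlinearity `|f|² f` (pointwise). -/
def cubic (f : Torus → ℂ) : Torus → ℂ := fun x => (‖f x‖ : ℂ) ^ 2 * f x

/-- The filtered cubic nonlinearity `Π_τ(|Π_τ f|² Π_τ f)`. -/
def projCubic (τ : ℝ) (f : Torus → ℂ) : Torus → ℂ := projC τ (cubic (projC τ f))

/-- `v` is the (global-in-time) mild solution of the projected equation
`i∂_t v = -∂_x² v - μ Π_τ(|Π_τ v|² Π_τ v)`, `v(0) = Π_τ u₀`. -/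
def IsProjSolution (μ τ : ℝ) (u₀ : Torus → ℂ) (v : ℝ → Torus → ℂ) : Prop :=
  ContL2On Set.univ v ∧
  ∀ t : ℝ, ∀ x : Torus,
    v t x = schrod t (projC τ u₀) x
      + Complex.I * μ * ∫ s in (0 : ℝ)..t, schrod (t - s) (projCubic τ (v s)) x

/-- The cubic NLS `i∂_t u = -∂_x² u - μ |u|² u` holds in the sense of space-time
distributions on `(0,T) × 𝕋` (tested against `ψ(t) e^{-ikx}`). -/
def DistribSolOn (μ T : ℝ) (u : ℝ → Torus → ℂ) : Prop :=
  ∀ k : ℤ, ∀ ψ : ℝ → ℂ, ContDiff ℝ (⊤ : ℕ∞) ψ → tsupport ψ ⊆ Set.Ioo 0 T →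
    -Complex.I * ∫ t : ℝ, deriv ψ t * fourierCoeff (u t) k
      = (k : ℂ) ^ 2 * ∫ t : ℝ, ψ t * fourierCoeff (u t) k
        - (μ : ℂ) * ∫ t : ℝ, ψ t * fourierCoeff (cubic (u t)) k

/-- `u ∈ L⁴((0,T) × 𝕋)`. -/
def SpaceTimeL4 (T : ℝ) (u : ℝ → Torus → ℂ) : Prop :=
  MemLp (fun p : ℝ × Torus => u p.1 p.2) 4
    ((volume.restrict (Set.Ioo 0 T)).prod haarAddCircle)

/-- Space-time Fourier transform `ṽ(σ,k)` of `v : ℝ × 𝕋 → ℂ`. -/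
def stFT (v : ℝ → Torus → ℂ) (σ : ℝ) (k : ℤ) : ℂ :=
  ∫ t : ℝ, Complex.exp (-Complex.I * σ * t) * fourierCoeff (v t) k

/-- The (continuous) Bourgain `X^{s,b}` norm, valued in `ℝ≥0∞`. -/
def XcNorm (s b : ℝ) (v : ℝ → Torus → ℂ) : ℝ≥0∞ :=
  (∫⁻ σ : ℝ, ∑' k : ℤ,
      ENNReal.ofReal ((1 + |(k : ℝ)|) ^ (2 * s) * (1 + |σ + (k : ℝ) ^ 2|) ^ (2 * b)
        * ‖stFT v σ k‖ ^ 2)) ^ (1 / 2 : ℝ)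

/-- The restriction norm `‖u‖_{X^{s,b}(T)}` is bounded by `M`: some extension of `u`
from `(0,T)` has `X^{s,b}` norm at most `M`. -/
def XresBounded (s b T : ℝ) (u : ℝ → Torus → ℂ) (M : ℝ≥0∞) : Prop :=
  ∃ v : ℝ → Torus → ℂ, (∀ t ∈ Set.Ioo 0 T, v t = u t) ∧ XcNorm s b v ≤ M

/-- `u` is a Bourgain-class solution of cubic NLS on `[0,T]` with datum `u₀`. -/
def IsNLSSolution (μ T : ℝ) (u₀ : Torus → ℂ) (u : ℝ → Torus → ℂ) : Prop :=
  ContL2On (Set.Icc 0 T) u ∧ SpaceTimeL4 T u ∧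
  (∃ b ∈ Set.Ioo (1 / 2 : ℝ) (5 / 8 : ℝ), ∃ v : ℝ → Torus → ℂ,
      (∀ t ∈ Set.Ioo 0 T, v t = u t) ∧ XcNorm 0 b v < ⊤) ∧
  u 0 = u₀ ∧ DistribSolOn μ T u

/-- One step of the pointwise nonlinear flow `e^{iμτ|Π_τ f|²} Π_τ f`. -/
def lieFlow (μ τ : ℝ) (f : Torus → ℂ) : Torus → ℂ := fun x =>
  Complex.exp (Complex.I * μ * τ * (‖projC τ f x‖ : ℂ) ^ 2) * projC τ f x

/-- The filtered Lie splitting scheme `u⁰ = Π_τ u₀`,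
`u^{n+1} = e^{iτ∂_x²} Π_τ (e^{iμτ|Π_τ uⁿ|²} Π_τ uⁿ)`. -/
def lieScheme (μ τ : ℝ) (u₀ : Torus → ℂ) : ℕ → Torus → ℂ
  | 0 => projC τ u₀
  | n + 1 => schrod τ (projC τ (lieFlow μ τ (lieScheme μ τ u₀ n)))

/-- `d_τ(σ) = (e^{iτσ}-1)/τ`. -/
def dtau (τ σ : ℝ) : ℂ := (Complex.exp (Complex.I * τ * σ) - 1) / τ

/-- The discrete Bourgain `X^{s,b}_τ` norm of a sequence of functions on the torus. -/
def XdNorm (τ s b : ℝ) (u : ℤ → Torus → ℂ) : ℝ :=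
  Real.sqrt (∫ σ in Set.Ioc (-(Real.pi / τ)) (Real.pi / τ),
    ∑' k : ℤ, jbr k ^ (2 * s) * jbr ‖dtau τ (σ - (k : ℝ) ^ 2)‖ ^ (2 * b) *
      ‖(τ : ℂ) * ∑' m : ℤ, fourierCoeff (u m) k * Complex.exp (Complex.I * m * τ * σ)‖ ^ 2)

/-- The discrete space-time Lebesgue norm `‖(u_n)‖_{ℓ^p_τ L^q}`. -/
def lpLqNorm (τ p q : ℝ) (u : ℤ → Torus → ℂ) : ℝ :=
  (τ * ∑' n : ℤ, (eLpNorm (u n) (ENNReal.ofReal q) haarAddCircle).toReal ^ p) ^ (1 / p)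

theorem jbr_one_le (x : ℝ) : 1 ≤ jbr x := by
  unfold jbr
  rw [Real.one_le_sqrt]
  nlinarith [sq_nonneg x]

theorem jbr_pos (x : ℝ) : 0 < jbr x := lt_of_lt_of_le one_pos (jbr_one_le x)

theorem jbr_continuous : Continuous jbr := by
  unfold jbr
  fun_prop

theorem fourierCoeff_trig (S : Finset ℤ) (a : ℤ → ℂ) (n : ℤ) :
    fourierCoeff (T := 2 * Real.pi) (fun x => ∑ k ∈ S, a k * fourier k x) n
      = if n ∈ S then a n else 0 := by
  have h1 : (fun x : Torus => ∑ k ∈ S, a k * fourier k x)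
      = ∑ k ∈ S, (fun x : Torus => a k * fourier k x) := by
    ext x; simp
  have hint : ∀ k ∈ S, Integrable (fun x : Torus => a k * fourier k x) haarAddCircle := by
    intro k _
    have hc : Continuous (fun x : Torus => a k * fourier k x) := by fun_prop
    exact hc.integrable_of_hasCompactSupport (HasCompactSupport.of_compactSpace _)
  rw [h1, fourierCoeff.sum S _ hint]
  simp only [Finset.sum_apply, fourierCoeff.const_mul, fourierCoeff_fourier, Pi.single_apply]
  simp

theorem lowfreq_finite (N : ℝ) : {k : ℤ | |(k : ℝ)| ≤ N}.Finite := by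
  apply (Set.finite_Icc (-⌊N⌋) ⌊N⌋).subset
  intro k hk
  have hk' : |(k : ℝ)| ≤ N := hk
  rw [abs_le] at hk'
  constructor
  · have : -k ≤ ⌊N⌋ := Int.le_floor.2 (by push_cast; linarith)
    linarith
  · exact Int.le_floor.2 hk'.2

theorem projC_eq (τ : ℝ) (f : Torus → ℂ) :
    projC τ f = fun x => ∑ k ∈ (lowfreq_finite (τ ^ (-(1 : ℝ) / 2))).toFinset,
      fourierCoeff f k * fourier k x := by
  ext x
  unfold projC
  rw [tsum_eq_sum (s := (lowfreq_finite (τ ^ (-(1 : ℝ) / 2))).toFinset)]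
  · apply Finset.sum_congr rfl
    intro k hk
    rw [if_pos (by simpa using hk)]
  · intro k hk
    rw [if_neg (by simpa using hk)]

theorem coeff_projC (τ : ℝ) (f : Torus → ℂ) (k : ℤ) :
    fourierCoeff (projC τ f) k
      = if |(k : ℝ)| ≤ τ ^ (-(1 : ℝ) / 2) then fourierCoeff f k else 0 := by
  rw [projC_eq, fourierCoeff_trig]
  simp

def mult (τ s : ℝ) (k : ℤ) : ℂ :=
  if |(k : ℝ)| ≤ τ ^ (-(1 : ℝ) / 2) then Complex.exp (Complex.I * ((s * (k : ℝ) ^ 2 : ℝ) : ℂ)) - 1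
  else 0

theorem diff_eq (τ s : ℝ) (f : Torus → ℂ) :
    schrod (-s) (projC τ f) - projC τ f =
      fun x => ∑ k ∈ (lowfreq_finite (τ ^ (-(1 : ℝ) / 2))).toFinset,
        (mult τ s k * fourierCoeff f k) * fourier k x := by
  ext x
  have h1 : schrod (-s) (projC τ f) x =
      ∑ k ∈ (lowfreq_finite (τ ^ (-(1 : ℝ) / 2))).toFinset,
        Complex.exp (Complex.I * ((s * (k : ℝ) ^ 2 : ℝ) : ℂ)) * fourierCoeff f k
          * fourier k x := by
    unfold schrod
    rw [tsum_eq_sum (s := (lowfreq_finite (τ ^ (-(1 : ℝ) / 2))).toFinset)]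
    · apply Finset.sum_congr rfl
      intro k hk
      rw [coeff_projC, if_pos (by simpa using hk)]
      congr 3
      push_cast
      ring
    · intro k hk
      rw [coeff_projC, if_neg (by simpa using hk)]
      simp
  rw [Pi.sub_apply, h1, projC_eq, ← Finset.sum_sub_distrib]
  apply Finset.sum_congr rfl
  intro k hk
  unfold mult
  rw [if_pos (by simpa using hk)]
  ring

theorem coeff_diff (τ s : ℝ) (f : Torus → ℂ) (k : ℤ) :
    fourierCoeff (schrod (-s) (projC τ f) - projC τ f) k = mult τ s k * fourierCoeff f k := by
  rw [diff_eq, fourierCoeff_trig]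
  split_ifs with h
  · rfl
  · unfold mult
    rw [if_neg (by simpa using h)]
    simp

theorem mult_bound (s₁ : ℝ) (hs₁ : s₁ ∈ Set.Icc (0 : ℝ) 2) (τ : ℝ) (hτ : τ ∈ Set.Ioc (0 : ℝ) 1)
    (s : ℝ) (hs : s ∈ Set.Icc (-τ) τ) (k : ℤ) :
    ‖mult τ s k‖ ^ 2 ≤ τ ^ s₁ * jbr k ^ (2 * s₁) := by
  have hτ0 : 0 < τ := hτ.1
  have hj := jbr_pos k
  have hR : 0 ≤ τ ^ (s₁ / 2) * jbr k ^ s₁ := by positivity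
  have hsq : τ ^ s₁ * jbr k ^ (2 * s₁) = (τ ^ (s₁ / 2) * jbr k ^ s₁) ^ 2 := by
    rw [mul_pow, ← Real.rpow_natCast, ← Real.rpow_natCast, ← Real.rpow_mul hτ0.le,
      ← Real.rpow_mul hj.le]
    congr 2 <;> push_cast <;> ring
  rw [hsq]
  apply pow_le_pow_left₀ (norm_nonneg _)
  unfold mult
  split_ifs with h
  · have h1 : ‖Complex.exp (Complex.I * ((s * (k : ℝ) ^ 2 : ℝ) : ℂ)) - 1‖ ≤ τ * (k : ℝ) ^ 2 := by
      refine Real.norm_exp_I_mul_ofReal_sub_one_le.trans ?_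
      rw [Real.norm_eq_abs, abs_mul, abs_of_nonneg (sq_nonneg (k : ℝ))]
      exact mul_le_mul_of_nonneg_right (abs_le.2 hs) (sq_nonneg _)
    have h2 : τ * (k : ℝ) ^ 2 ≤ 1 := by
      have : (k : ℝ) ^ 2 ≤ τ⁻¹ := by
        rw [← sq_abs]
        calc |(k : ℝ)| ^ 2 ≤ (τ ^ (-(1 : ℝ) / 2)) ^ 2 := pow_le_pow_left₀ (abs_nonneg _) h 2
          _ = τ⁻¹ := by
            rw [← Real.rpow_natCast, ← Real.rpow_mul hτ0.le, ← Real.rpow_neg_one]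
            norm_num
      calc τ * (k : ℝ) ^ 2 ≤ τ * τ⁻¹ := mul_le_mul_of_nonneg_left this hτ0.le
        _ = 1 := mul_inv_cancel₀ hτ0.ne'
    have h0 : 0 ≤ τ * (k : ℝ) ^ 2 := by positivity
    calc _ ≤ τ * (k : ℝ) ^ 2 := h1
      _ ≤ (τ * (k : ℝ) ^ 2) ^ (s₁ / 2) :=
        Real.self_le_rpow_of_le_one h0 h2 (by linarith [hs₁.2])
      _ = τ ^ (s₁ / 2) * ((k : ℝ) ^ 2) ^ (s₁ / 2) := Real.mul_rpow hτ0.le (sq_nonneg _)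
      _ ≤ τ ^ (s₁ / 2) * (jbr k ^ 2) ^ (s₁ / 2) := by
        apply mul_le_mul_of_nonneg_left _ (by positivity)
        apply Real.rpow_le_rpow (sq_nonneg _) _ (by linarith [hs₁.1])
        unfold jbr
        rw [Real.sq_sqrt (by positivity)]
        linarith
      _ = τ ^ (s₁ / 2) * jbr k ^ s₁ := by
        rw [← Real.rpow_natCast (jbr k), ← Real.rpow_mul hj.le]
        congr 2
        push_cast
        ring
  · simpa using hR

theorem dtau_norm_le (τ : ℝ) (hτ : 0 < τ) (x : ℝ) : ‖dtau τ x‖ ≤ 2 / τ := by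
  unfold dtau
  rw [norm_div, Complex.norm_real, Real.norm_of_nonneg hτ.le]
  apply div_le_div_of_nonneg_right _ hτ.le
  refine (norm_sub_le _ _).trans ?_
  have : Complex.I * τ * x = ((τ * x : ℝ) : ℂ) * Complex.I := by push_cast; ring
  rw [this, Complex.norm_exp_ofReal_mul_I]
  norm_num

theorem weight_le (τ : ℝ) (hτ : 0 < τ) (b x : ℝ) :
    jbr ‖dtau τ x‖ ^ (2 * b) ≤ jbr (2 / τ) ^ (2 * |b|) := by
  calc jbr ‖dtau τ x‖ ^ (2 * b) ≤ jbr ‖dtau τ x‖ ^ (2 * |b|) :=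
        Real.rpow_le_rpow_of_exponent_le (jbr_one_le _) (by linarith [le_abs_self b])
    _ ≤ _ := by
      apply Real.rpow_le_rpow (jbr_pos _).le _ (by positivity)
      unfold jbr
      apply Real.sqrt_le_sqrt
      have := pow_le_pow_left₀ (norm_nonneg _) (dtau_norm_le τ hτ x) 2
      linarith

theorem exp_norm_one (m : ℤ) (τ σ : ℝ) : ‖Complex.exp (Complex.I * m * τ * σ)‖ = 1 := by
  have : Complex.I * m * τ * σ = ((m * τ * σ : ℝ) : ℂ) * Complex.I := by push_cast; ring
  rw [this, Complex.norm_exp_ofReal_mul_I]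

theorem term_continuous (τ s₁ b : ℝ) (S : Finset ℤ) (c : ℤ → ℂ) (k : ℤ) :
    Continuous fun σ : ℝ => jbr k ^ (2 * s₁) * jbr ‖dtau τ (σ - (k : ℝ) ^ 2)‖ ^ (2 * b) *
      ‖(τ : ℂ) * ∑ m ∈ S, c m * Complex.exp (Complex.I * m * τ * σ)‖ ^ 2 := by
  have h1 : Continuous fun σ : ℝ => jbr ‖dtau τ (σ - (k : ℝ) ^ 2)‖ := by
    apply jbr_continuous.comp
    unfold dtau
    simp only [div_eq_mul_inv]
    fun_prop
  have h2 : Continuous fun σ : ℝ => jbr ‖dtau τ (σ - (k : ℝ) ^ 2)‖ ^ (2 * b) :=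
    h1.rpow_const (fun σ => Or.inl (jbr_pos _).ne')
  fun_prop

theorem term_bound (τ : ℝ) (hτ : 0 < τ) (s₁ b : ℝ) (S : Finset ℤ) (c : ℤ → ℂ) (k : ℤ) (σ : ℝ) :
    jbr k ^ (2 * s₁) * jbr ‖dtau τ (σ - (k : ℝ) ^ 2)‖ ^ (2 * b) *
      ‖(τ : ℂ) * ∑ m ∈ S, c m * Complex.exp (Complex.I * m * τ * σ)‖ ^ 2
    ≤ jbr (2 / τ) ^ (2 * |b|) * τ ^ 2 * S.card * ∑ m ∈ S, jbr k ^ (2 * s₁) * ‖c m‖ ^ 2 := by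
  have hj := jbr_pos k
  have h1 : ‖(τ : ℂ) * ∑ m ∈ S, c m * Complex.exp (Complex.I * m * τ * σ)‖ ^ 2
      ≤ τ ^ 2 * (S.card * ∑ m ∈ S, ‖c m‖ ^ 2) := by
    rw [norm_mul, mul_pow, Complex.norm_real, Real.norm_of_nonneg hτ.le]
    apply mul_le_mul_of_nonneg_left _ (sq_nonneg _)
    refine le_trans (pow_le_pow_left₀ (norm_nonneg _) (norm_sum_le _ _) 2) ?_
    simp only [norm_mul, exp_norm_one, mul_one]
    exact sq_sum_le_card_mul_sum_sq
  calc _ ≤ jbr k ^ (2 * s₁) * jbr (2 / τ) ^ (2 * |b|) *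
        (τ ^ 2 * (S.card * ∑ m ∈ S, ‖c m‖ ^ 2)) := by
        apply mul_le_mul _ h1 (by positivity)
        · have := jbr_pos (2 / τ)
          positivity
        · exact mul_le_mul_of_nonneg_left (weight_le τ hτ b _) (by positivity)
    _ = _ := by rw [← Finset.mul_sum]; ring

/-- The frequency-localized smoothing bound
`‖((e^{-is∂_x²} - 1) Π_τ F_n)‖_{X^{0,b}_τ} ≤ τ^{s₁/2} ‖(F_n)‖_{X^{s₁,b}_τ}`
for `s₁ ∈ [0,2]`, `|s| ≤ τ`. -/
theorem projector_commutator_bound (s₁ : ℝ) (hs₁ : s₁ ∈ Set.Icc (0 : ℝ) 2) (b : ℝ) :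
    ∀ τ ∈ Set.Ioc (0 : ℝ) 1, ∀ s ∈ Set.Icc (-τ) τ, ∀ F : ℤ → Torus → ℂ,
      (∀ n, InHs s₁ (F n)) → {n : ℤ | F n ≠ 0}.Finite →
      XdNorm τ 0 b (fun n => schrod (-s) (projC τ (F n)) - projC τ (F n))
        ≤ τ ^ (s₁ / 2) * XdNorm τ s₁ b F := by
  intro τ hτ s hs F hF hfin
  have hτ0 : 0 < τ := hτ.1
  set S := hfin.toFinset with hS
  have hc0 : ∀ m ∉ S, ∀ k, fourierCoeff (F m) k = 0 := by
    intro m hm k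
    have : F m = 0 := by simpa [hS] using hm
    rw [this]
    simp [fourierCoeff]
  have htsum : ∀ (k : ℤ) (σ : ℝ),
      ∑' m : ℤ, fourierCoeff (F m) k * Complex.exp (Complex.I * m * τ * σ)
        = ∑ m ∈ S, fourierCoeff (F m) k * Complex.exp (Complex.I * m * τ * σ) := by
    intro k σ
    apply tsum_eq_sum
    intro m hm
    rw [hc0 m hm k, zero_mul]
  have hsummable : Summable fun k : ℤ => jbr (2 / τ) ^ (2 * |b|) * τ ^ 2 * S.card *
      ∑ m ∈ S, jbr k ^ (2 * s₁) * ‖fourierCoeff (F m) k‖ ^ 2 :=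
    (summable_sum fun m _ => (hF m).2).mul_left _
  let G : ℤ → ℝ → ℝ := fun k σ =>
    jbr k ^ (2 * s₁) * jbr ‖dtau τ (σ - (k : ℝ) ^ 2)‖ ^ (2 * b) *
      ‖(τ : ℂ) * ∑ m ∈ S, fourierCoeff (F m) k * Complex.exp (Complex.I * m * τ * σ)‖ ^ 2
  have hG0 : ∀ k σ, 0 ≤ G k σ := by
    intro k σ
    have h1 := jbr_pos k
    have h2 := jbr_pos ‖dtau τ (σ - (k : ℝ) ^ 2)‖
    positivity
  have hGb : ∀ k σ, ‖G k σ‖ ≤ jbr (2 / τ) ^ (2 * |b|) * τ ^ 2 * S.card *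
      ∑ m ∈ S, jbr k ^ (2 * s₁) * ‖fourierCoeff (F m) k‖ ^ 2 := by
    intro k σ
    rw [Real.norm_of_nonneg (hG0 k σ)]
    exact term_bound τ hτ0 s₁ b S (fun m => fourierCoeff (F m) k) k σ
  have hGc : Continuous fun σ => ∑' k, G k σ :=
    continuous_tsum (fun k => term_continuous τ s₁ b S (fun m => fourierCoeff (F m) k) k)
      hsummable hGb
  have hGs : ∀ σ, Summable fun k => G k σ := fun σ =>
    Summable.of_norm_bounded hsummable (fun k => hGb k σ)
  have hGi : IntegrableOn (fun σ => τ ^ s₁ * ∑' k, G k σ)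
      (Set.Ioc (-(Real.pi / τ)) (Real.pi / τ)) volume :=
    (((continuous_const.mul hGc).continuousOn (s := Set.Icc _ _)).integrableOn_Icc).mono_set
      Set.Ioc_subset_Icc_self
  have hpt : ∀ (k : ℤ) (σ : ℝ),
      jbr k ^ (2 * (0 : ℝ)) * jbr ‖dtau τ (σ - (k : ℝ) ^ 2)‖ ^ (2 * b) *
      ‖(τ : ℂ) * ∑' m : ℤ, fourierCoeff (schrod (-s) (projC τ (F m)) - projC τ (F m)) k
        * Complex.exp (Complex.I * m * τ * σ)‖ ^ 2 ≤ τ ^ s₁ * G k σ := by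
    intro k σ
    have h2 := jbr_pos ‖dtau τ (σ - (k : ℝ) ^ 2)‖
    simp only [coeff_diff, mul_assoc (mult τ s k), tsum_mul_left]
    rw [htsum, mul_left_comm, norm_mul (mult τ s k), mul_pow, mul_zero, Real.rpow_zero, one_mul]
    have hm := mult_bound s₁ hs₁ τ hτ s hs k
    calc _ = ‖mult τ s k‖ ^ 2 * (jbr ‖dtau τ (σ - (k : ℝ) ^ 2)‖ ^ (2 * b) *
          ‖(τ : ℂ) * ∑ m ∈ S, fourierCoeff (F m) k
            * Complex.exp (Complex.I * m * τ * σ)‖ ^ 2) := by ring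
      _ ≤ (τ ^ s₁ * jbr k ^ (2 * s₁)) * (jbr ‖dtau τ (σ - (k : ℝ) ^ 2)‖ ^ (2 * b) *
          ‖(τ : ℂ) * ∑ m ∈ S, fourierCoeff (F m) k
            * Complex.exp (Complex.I * m * τ * σ)‖ ^ 2) :=
          mul_le_mul_of_nonneg_right hm (by positivity)
      _ = _ := by simp only [G]; ring
  have hl0 : ∀ (k : ℤ) (σ : ℝ),
      0 ≤ jbr k ^ (2 * (0 : ℝ)) * jbr ‖dtau τ (σ - (k : ℝ) ^ 2)‖ ^ (2 * b) *
      ‖(τ : ℂ) * ∑' m : ℤ, fourierCoeff (schrod (-s) (projC τ (F m)) - projC τ (F m)) k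
        * Complex.exp (Complex.I * m * τ * σ)‖ ^ 2 := by
    intro k σ
    have h1 := jbr_pos k
    have h2 := jbr_pos ‖dtau τ (σ - (k : ℝ) ^ 2)‖
    positivity
  have hint : (∫ σ in Set.Ioc (-(Real.pi / τ)) (Real.pi / τ),
      ∑' k : ℤ, jbr k ^ (2 * (0 : ℝ)) * jbr ‖dtau τ (σ - (k : ℝ) ^ 2)‖ ^ (2 * b) *
      ‖(τ : ℂ) * ∑' m : ℤ, fourierCoeff (schrod (-s) (projC τ (F m)) - projC τ (F m)) k
        * Complex.exp (Complex.I * m * τ * σ)‖ ^ 2)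
      ≤ ∫ σ in Set.Ioc (-(Real.pi / τ)) (Real.pi / τ), τ ^ s₁ * ∑' k, G k σ := by
    apply integral_mono_of_nonneg
    · exact Eventually.of_forall fun σ => tsum_nonneg fun k => hl0 k σ
    · exact hGi
    · refine Eventually.of_forall fun σ => ?_
      have hs2 : Summable fun k => τ ^ s₁ * G k σ := (hGs σ).mul_left _
      have hs1 := Summable.of_nonneg_of_le (fun k => hl0 k σ) (fun k => hpt k σ) hs2
      show _ ≤ τ ^ s₁ * ∑' k, G k σ
      rw [← tsum_mul_left]
      exact hs1.tsum_le_tsum (fun k => hpt k σ) hs2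
  rw [integral_const_mul] at hint
  have hτs : τ ^ (s₁ / 2) = Real.sqrt (τ ^ s₁) := by
    rw [Real.sqrt_eq_rpow, ← Real.rpow_mul hτ0.le]
    congr 1
    ring
  unfold XdNorm
  rw [hτs, ← Real.sqrt_mul (by positivity)]
  apply Real.sqrt_le_sqrt
  simp only [htsum]
  exact hint
end
end

section
/- Let τ > 0, μ ∈ {1,-1}, and define Ψ : ℂ → ℂ by Ψ(z) = ((e^{iμτ|z|²} − 1)/(iμτ)) · z. Then for all w, e ∈ ℂ one has |Ψ(w) − Ψ(w − e)| ≤ 3(|w|²|e| + |w||e|² + |e|³). -/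
noncomputable section

open MeasureTheory Complex Filter Topology AddCircle
open scoped ENNReal

theorem lie_aux (c a b : ℝ) (hc : |c| ≠ 0) :
    ‖(Complex.exp (Complex.I * (c * a : ℝ)) - Complex.exp (Complex.I * (c * b : ℝ)))
      / (Complex.I * (c : ℂ))‖ ≤ |a - b| := by
  have h1 : Complex.exp (Complex.I * (c * a : ℝ)) - Complex.exp (Complex.I * (c * b : ℝ))
      = Complex.exp (Complex.I * (c * b : ℝ)) *
        (Complex.exp (Complex.I * (c * (a - b) : ℝ)) - 1) := by
    rw [mul_sub, ← Complex.exp_add, mul_one]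
    congr 2
    push_cast
    ring
  rw [h1, norm_div, norm_mul, Complex.norm_exp_I_mul_ofReal, one_mul, norm_mul, Complex.norm_I,
    one_mul, Complex.norm_real, Real.norm_eq_abs, div_le_iff₀ (by positivity)]
  refine (Real.norm_exp_I_mul_ofReal_sub_one_le).trans ?_
  rw [Real.norm_eq_abs, abs_mul, mul_comm]

/-- Pointwise Lipschitz-type bound for the nonlinear flow
`Ψ(z) = ((e^{iμτ|z|²} - 1)/(iμτ)) z` of one step of the filtered Lie splitting:
`|Ψ(w) - Ψ(w-e)| ≤ 3(|w|²|e| + |w||e|² + |e|³)`. -/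
theorem lie_flow_pointwise_estimate (τ : ℝ) (hτ : 0 < τ) (μ : ℝ) (hμ : μ = 1 ∨ μ = -1)
    (w e : ℂ) :
    ‖(Complex.exp (Complex.I * μ * τ * (‖w‖ : ℂ) ^ 2) - 1) / (Complex.I * μ * τ) * w
        - (Complex.exp (Complex.I * μ * τ * (‖w - e‖ : ℂ) ^ 2) - 1) / (Complex.I * μ * τ)
            * (w - e)‖
      ≤ 3 * (‖w‖ ^ 2 * ‖e‖ + ‖w‖ * ‖e‖ ^ 2 + ‖e‖ ^ 3) := by
  have hc : |μ * τ| ≠ 0 := by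
    rcases hμ with h | h <;> subst h <;> simp [hτ.ne']
  have hw := lie_aux (μ * τ) (‖w‖ ^ 2) 0 hc
  have hd := lie_aux (μ * τ) (‖w‖ ^ 2) (‖w - e‖ ^ 2) hc
  have hid : (Complex.exp (Complex.I * μ * τ * (‖w‖ : ℂ) ^ 2) - 1) / (Complex.I * μ * τ) * w
        - (Complex.exp (Complex.I * μ * τ * (‖w - e‖ : ℂ) ^ 2) - 1) / (Complex.I * μ * τ)
            * (w - e)
      = (Complex.exp (Complex.I * (μ * τ * ‖w‖ ^ 2 : ℝ)) -
          Complex.exp (Complex.I * (μ * τ * 0 : ℝ))) / (Complex.I * ((μ * τ : ℝ) : ℂ)) * e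
        + (Complex.exp (Complex.I * (μ * τ * ‖w‖ ^ 2 : ℝ)) -
          Complex.exp (Complex.I * (μ * τ * ‖w - e‖ ^ 2 : ℝ))) / (Complex.I * ((μ * τ : ℝ) : ℂ))
          * (w - e) := by
    push_cast
    simp only [mul_zero, Complex.exp_zero, ← mul_assoc]
    ring
  rw [hid]
  refine (norm_add_le _ _).trans ?_
  rw [norm_mul, norm_mul]
  have h1 : ‖w - e‖ ≤ ‖w‖ + ‖e‖ := norm_sub_le _ _
  have h2 : |‖w‖ - ‖w - e‖| ≤ ‖e‖ := by
    have := abs_norm_sub_norm_le w (w - e)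
    simpa using this
  have h3 : |‖w‖ ^ 2 - ‖w - e‖ ^ 2| ≤ ‖e‖ * (2 * ‖w‖ + ‖e‖) := by
    have : ‖w‖ ^ 2 - ‖w - e‖ ^ 2 = (‖w‖ - ‖w - e‖) * (‖w‖ + ‖w - e‖) := by ring
    rw [this, abs_mul, abs_of_nonneg (by positivity : 0 ≤ ‖w‖ + ‖w - e‖)]
    exact mul_le_mul h2 (by linarith) (by positivity) (by positivity)
  rw [sub_zero, abs_of_nonneg (by positivity)] at hw
  have h4 := mul_le_mul_of_nonneg_right hw (norm_nonneg e)
  have h5 := mul_le_mul (hd.trans h3) h1 (norm_nonneg _) (by positivity)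
  have h6 : 0 ≤ ‖e‖ ^ 3 := by positivity
  nlinarith [h4, h5, h6]
end
end
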